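/- Let O be a Noetherian local ring with maximal ideal m and residue field k = O/m, such that O contains a field mapping isomorphically to k. Then the Hilbert–Samuel generating function Σ_{i≥0} dim_k(O/m^{i+1}) T^i is a rational function of the form Q(T)/(1−T)^d for some polynomial Q ∈ ℤ[T] and some integer d ≥ 0 (d = dim O), and Q(1) is a positive integer (the multiplicity e_m(O)). -/

import Mathlib

open PowerSeries

/-!
Call `F = ∑ dim (M ⧸ Iⁱ⁺¹M) Tⁱ`; then `(1 - T) F` is the Hilbert series of
`gr_I M = ⨁ IⁱM ⧸ Iⁱ⁺¹M = B ⧸ A`, where `A ≤ B` are the homogeneous submodules of `M[T]` with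
components `Iⁱ⁺¹M` and `IⁱM`. Its rationality is the Hilbert–Serre induction on a generating set
of `I`: multiplication by `x T` on `B ⧸ A` has kernel `(B ⊓ (x T)⁻¹ A) ⧸ A` and cokernel
`B ⧸ (A ⊔ x T B)`, both killed by `x T`, and comparing dimensions gives a factor `1 - T`.
Noetherianity enters as the ascending chain condition between `A` and `B`, inherited from the
Rees module `⨁ IⁱM Tⁱ`; once no generator is left, it forces `A i = B i` for large `i`.

For positivity write `F (1 - T)^d = Q` with `d` minimal. If `d = 0`, the coefficients of `Q` are
those of `F`, nonnegative and not all zero. If `d > 0`, then `Q(1) ≠ 0`, and `Q(1) < 0` would make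
the coefficients of `F` eventually negative, by repeated summation.
-/

open Filter Module

theorem coeff_succ_mul_one_sub_X {R : Type*} [CommRing R] (F : R⟦X⟧) (n : ℕ) :
    coeff (n + 1) (F * (1 - X)) = coeff (n + 1) F - coeff n F := by
  simp [mul_sub, coeff_succ_mul_X]

theorem eventually_coeff_eq_eval_one {R : Type*} [CommRing R] {F : R⟦X⟧} {Q : Polynomial R}
    (h : F * (1 - X) = (Q : R⟦X⟧)) : ∀ᶠ n in atTop, coeff n F = Q.eval 1 := by
  have hF : F = (Q : R⟦X⟧) * mk 1 := by
    rw [← h, mul_assoc, mul_comm (1 - X), mk_one_mul_one_sub_eq_one, mul_one]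
  filter_upwards [eventually_ge_atTop Q.natDegree] with n hn
  rw [hF, coeff_mul, Finset.Nat.sum_antidiagonal_eq_sum_range_succ_mk,
    Polynomial.eval_eq_sum_range' (Nat.lt_succ_of_le hn)]
  simp

theorem eventually_coeff_neg_of_mul_one_sub_X {F : ℤ⟦X⟧}
    (h : ∀ᶠ n in atTop, coeff n (F * (1 - X)) < 0) : ∀ᶠ n in atTop, coeff n F < 0 := by
  obtain ⟨N, hN⟩ := eventually_atTop.1 h
  have hle (j : ℕ) : coeff (N + j) F ≤ coeff N F - j := by
    induction j with
    | zero => simp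
    | succ j ih =>
      have hdiff := hN (N + j + 1) (by lia)
      rw [coeff_succ_mul_one_sub_X] at hdiff
      rw [← add_assoc]
      push_cast
      linarith
  filter_upwards [eventually_gt_atTop (N + (coeff N F).toNat)] with n hn
  have := hle (n - N)
  rw [Nat.add_sub_of_le (by lia)] at this
  lia

theorem eventually_coeff_neg_of_eval_one_neg {F : ℤ⟦X⟧} {d : ℕ} {Q : Polynomial ℤ}
    (h : F * (1 - X) ^ (d + 1) = (Q : ℤ⟦X⟧)) (hQ : Q.eval 1 < 0) :
    ∀ᶠ n in atTop, coeff n F < 0 := by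
  induction d generalizing F with
  | zero =>
    rw [zero_add, pow_one] at h
    exact (eventually_coeff_eq_eval_one h).mono fun n hn => hn ▸ hQ
  | succ d ih =>
    exact eventually_coeff_neg_of_mul_one_sub_X (ih (by rw [← h]; ring))

theorem eval_one_pos_of_coeff_nonneg {R : Type*} [Semiring R] [LinearOrder R]
    [IsStrictOrderedRing R] {Q : Polynomial R} (hQ : ∀ n, 0 ≤ Q.coeff n) (hQ0 : Q ≠ 0) :
    0 < Q.eval 1 := by
  simp only [Polynomial.eval_eq_sum, one_pow, mul_one]
  exact Finset.sum_pos (fun n hn => (hQ n).lt_of_ne' (Polynomial.mem_support_iff.1 hn))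
    (Polynomial.support_nonempty.2 hQ0)

theorem exists_mul_one_sub_X_pow_eq_eval_one_pos {F : ℤ⟦X⟧} (hF : ∀ n, 0 ≤ coeff n F)
    (hF0 : F ≠ 0) {d : ℕ} {Q : Polynomial ℤ} (h : F * (1 - X) ^ d = (Q : ℤ⟦X⟧)) :
    ∃ (d : ℕ) (Q : Polynomial ℤ), F * (1 - X) ^ d = (Q : ℤ⟦X⟧) ∧ 0 < Q.eval 1 := by
  induction d generalizing Q with
  | zero =>
    refine ⟨0, Q, h, ?_⟩
    rw [pow_zero, mul_one] at h
    refine eval_one_pos_of_coeff_nonneg (fun n => ?_) fun hQ => hF0 ?_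
    · simpa [h] using hF n
    · rw [h, hQ, Polynomial.coe_zero]
  | succ d ih =>
    rcases lt_trichotomy (Q.eval 1) 0 with hneg | hzero | hpos
    · obtain ⟨n, hn⟩ := (eventually_coeff_neg_of_eval_one_neg h hneg).exists
      exact absurd (hF n) hn.not_ge
    · obtain ⟨P, rfl⟩ := Polynomial.dvd_iff_isRoot.2 hzero
      have hX : (1 - X : ℤ⟦X⟧) ≠ 0 := right_ne_zero_of_mul_eq_one (mk_one_mul_one_sub_eq_one ℤ)
      refine ih (Q := -P) (mul_right_cancel₀ hX ?_)
      rw [mul_assoc, ← pow_succ, h]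
      simp only [Polynomial.coe_mul, Polynomial.coe_sub, Polynomial.coe_X, map_one,
        Polynomial.coe_one, Polynomial.coe_neg]
      ring
    · exact ⟨d + 1, Q, h, hpos⟩

theorem exists_eq_coe_of_eventually_coeff_eq_zero {S : Type*} [Semiring S] {F : S⟦X⟧}
    (h : ∀ᶠ n in atTop, coeff n F = 0) : ∃ Q : Polynomial S, F = (Q : S⟦X⟧) := by
  obtain ⟨N, hN⟩ := eventually_atTop.1 h
  refine ⟨trunc N F, ext fun n => ?_⟩
  rw [Polynomial.coeff_coe, coeff_trunc]
  split_ifs with hn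
  · rfl
  · exact hN n (not_lt.1 hn)

theorem eventually_eq_of_wellFoundedOn_Icc {α : Type*} [PartialOrder α] {A B : ℕ → α}
    (hAB : A ≤ B) (h : (Set.Icc A B).WellFoundedOn (· > ·)) : ∀ᶠ n in atTop, A n = B n := by
  have : WellFoundedGT (Set.Icc A B) := ⟨h⟩
  -- Switching from `A` to `B` one coordinate at a time gives an increasing chain.
  let f : ℕ →o Set.Icc A B :=
    { toFun n := ⟨(Set.Iio n).piecewise B A, Set.le_piecewise (fun i _ => hAB i) fun i _ => le_rfl,
        Set.piecewise_le (fun i _ => le_rfl) fun i _ => hAB i⟩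
      monotone' m n hmn i := by
        by_cases hi : i < m
        · simp [hi, hi.trans_le hmn]
        · simpa [hi] using
            Set.le_piecewise (s := Set.Iio n) (fun i _ => hAB i) (fun i _ => le_rfl) i }
  obtain ⟨n, hn⟩ := WellFoundedGT.monotone_chain_condition f
  filter_upwards [eventually_ge_atTop n] with i hi
  have := congrFun (congrArg Subtype.val (hn (i + 1) (by lia))) i
  change (Set.Iio n).piecewise B A i = (Set.Iio (i + 1)).piecewise B A i at this
  simpa [hi.not_gt] using this

theorem exists_sub_mem_and_map_sub_mem {R V W : Type*} [Ring R] [AddCommGroup V] [Module R V]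
    [AddCommGroup W] [Module R W] (f : V →ₗ[R] W) {B : Submodule R V} {A : Submodule R W}
    {v : V} {w : W} (h : f v - w ∈ A ⊔ B.map f) : ∃ u, u - v ∈ B ∧ f u - w ∈ A := by
  obtain ⟨a, ha, _, ⟨b, hb, rfl⟩, hab⟩ := Submodule.mem_sup.1 h
  refine ⟨v - b, by simpa using hb, ?_⟩
  rwa [map_sub, sub_right_comm, ← hab, add_sub_cancel_right]

theorem finrank_quotient_inf_comap_add {k R V W : Type*} [Field k] [CommRing R] [Algebra k R]
    [AddCommGroup V] [Module k V] [Module R V] [IsScalarTower k R V]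
    [AddCommGroup W] [Module k W] [Module R W] [IsScalarTower k R W]
    (f : V →ₗ[R] W) (B : Submodule R V) (A : Submodule R W)
    [Module.Finite k (V ⧸ B)] [Module.Finite k (W ⧸ A)] :
    finrank k (V ⧸ (B ⊓ A.comap f)) + finrank k (W ⧸ (A ⊔ B.map f)) =
      finrank k (V ⧸ B) + finrank k (W ⧸ A) := by
  -- `0 → V ⧸ (B ⊓ f⁻¹ A) → V ⧸ B × W ⧸ A → W ⧸ (A ⊔ f B) → 0` is exact.
  let ψ : V →ₗ[R] (V ⧸ B) × (W ⧸ A) := B.mkQ.prod (A.mkQ ∘ₗ f)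
  let π : (V ⧸ B) × (W ⧸ A) →ₗ[R] W ⧸ (A ⊔ B.map f) :=
    (Submodule.mapQ _ _ f (Submodule.map_le_iff_le_comap.1 le_sup_right)).coprod
      (-Submodule.factor le_sup_left)
  have hψ : LinearMap.ker ψ = B ⊓ A.comap f := by simp [ψ, LinearMap.ker_comp]
  have hπ : LinearMap.range π = ⊤ := LinearMap.range_eq_top.2 fun w => by
    obtain ⟨w, rfl⟩ := Submodule.mkQ_surjective _ w
    exact ⟨(0, -A.mkQ w), by simp [π]⟩
  have hexact : LinearMap.ker π = LinearMap.range ψ := by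
    apply le_antisymm
    · rintro ⟨v, w⟩ h
      obtain ⟨v, rfl⟩ := B.mkQ_surjective v
      obtain ⟨w, rfl⟩ := A.mkQ_surjective w
      have hmem : f v - w ∈ A ⊔ B.map f := by
        simpa [π, ← sub_eq_add_neg, ← Submodule.Quotient.mk_sub] using h
      obtain ⟨u, hu, hfu⟩ := exists_sub_mem_and_map_sub_mem f hmem
      exact ⟨u, Prod.ext ((Submodule.Quotient.eq B).2 hu) ((Submodule.Quotient.eq A).2 hfu)⟩
    · rintro _ ⟨v, rfl⟩
      simp [ψ, π]
  calc
    _ = finrank k (LinearMap.ker π) + finrank k (LinearMap.range π) := by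
      rw [← hψ, (ψ.quotKerEquivRange.restrictScalars k).finrank_eq, ← hexact, hπ,
        (Submodule.topEquiv.restrictScalars k).finrank_eq]
    _ = finrank k ((V ⧸ B) × (W ⧸ A)) := by
      rw [add_comm]
      exact (π.restrictScalars k).finrank_range_add_finrank_ker
    _ = _ := finrank_prod

section Shift

variable {R M : Type*} [CommRing R] [AddCommGroup M] [Module R M]

/-- A family `N : ℕ → Submodule R M` encodes the homogeneous submodule `⨁ N i Tⁱ` of `M[T]`;
`mapShift x N` is its image under multiplication by `x T`. -/
def mapShift (x : R) (N : ℕ → Submodule R M) : ℕ → Submodule R M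
  | 0 => ⊥
  | i + 1 => (N i).map (LinearMap.lsmul R M x)

/-- The preimage under multiplication by `x T` of the homogeneous submodule `⨁ N i Tⁱ` of
`M[T]`. -/
def comapShift (x : R) (N : ℕ → Submodule R M) (i : ℕ) : Submodule R M :=
  (N (i + 1)).comap (LinearMap.lsmul R M x)

theorem gc_mapShift_comapShift (x : R) :
    GaloisConnection (mapShift (M := M) x) (comapShift x) := fun B A => by
  refine ⟨fun h i => Submodule.map_le_iff_le_comap.1 (h (i + 1)), fun h i => ?_⟩
  cases i with
  | zero => exact bot_le
  | succ i => exact Submodule.map_le_iff_le_comap.2 (h i)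

theorem mapShift_comm (x y : R) (N : ℕ → Submodule R M) :
    mapShift x (mapShift y N) = mapShift y (mapShift x N) := by
  ext1 i
  rcases i with _ | _ | i
  · rfl
  · exact (Submodule.map_bot _).trans (Submodule.map_bot _).symm
  · simp only [mapShift, ← Submodule.map_comp]
    congr 1
    ext m
    exact smul_comm x y m

/-- The homogeneous submodule `⨁ N i Tⁱ` of `M[T]` is closed under multiplication by `x T` for
`x ∈ s`, so that it is a graded module over the polynomial ring on `s`. -/
def IsShiftStable (s : Set R) (N : ℕ → Submodule R M) : Prop :=
  ∀ x ∈ s, mapShift x N ≤ N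

theorem IsShiftStable.inf_comapShift {s : Set R} {A B : ℕ → Submodule R M}
    (hA : IsShiftStable s A) (hB : IsShiftStable s B) (x : R) :
    IsShiftStable s (B ⊓ comapShift x A) := fun y hy => by
  refine le_inf (((gc_mapShift_comapShift y).monotone_l inf_le_left).trans (hB y hy)) ?_
  rw [← gc_mapShift_comapShift x (mapShift y _) A, mapShift_comm]
  refine ((gc_mapShift_comapShift y).monotone_l ?_).trans (hA y hy)
  exact (gc_mapShift_comapShift x).l_le inf_le_right

theorem IsShiftStable.sup_mapShift {s : Set R} {A B : ℕ → Submodule R M}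
    (hA : IsShiftStable s A) (hB : IsShiftStable s B) (x : R) :
    IsShiftStable s (A ⊔ mapShift x B) := fun y hy => by
  refine (gc_mapShift_comapShift y).l_sup.trans_le (sup_le_sup (hA y hy) ?_)
  rw [mapShift_comm]
  exact (gc_mapShift_comapShift x).monotone_l (hB y hy)

theorem IsShiftStable.insert_of_le_comapShift {s : Set R} {A N : ℕ → Submodule R M} {x : R}
    (hN : IsShiftStable s N) (hAN : A ≤ N) (hNA : N ≤ comapShift x A) :
    IsShiftStable (insert x s) N :=
  Set.forall_mem_insert.2 ⟨((gc_mapShift_comapShift x).l_le hNA).trans hAN, hN⟩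

theorem IsShiftStable.insert_of_mapShift_le {s : Set R} {B N : ℕ → Submodule R M} {x : R}
    (hN : IsShiftStable s N) (hNB : N ≤ B) (hBN : mapShift x B ≤ N) :
    IsShiftStable (insert x s) N :=
  Set.forall_mem_insert.2 ⟨((gc_mapShift_comapShift x).monotone_l hNB).trans hBN, hN⟩

theorem isShiftStable_pow_smul_top (s : Set R) (n : ℕ) :
    IsShiftStable s fun i => (Ideal.span s ^ (i + n) • ⊤ : Submodule R M) := by
  rintro x hx (_ | i)
  · exact bot_le
  · refine Submodule.map_le_iff_le_comap.2 fun m hm => ?_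
    change x • m ∈ Ideal.span s ^ (i + 1 + n) • (⊤ : Submodule R M)
    rw [add_right_comm, pow_succ', mul_smul]
    exact Submodule.smul_mem_smul (Ideal.subset_span hx) hm

end Shift

section Finite

variable (k : Type*) {R M : Type*} [CommRing k] [CommRing R] [Algebra k R] [AddCommGroup M]
  [Module R M] [Module k M] [IsScalarTower k R M]

theorem finite_quotient_of_le {A B : Submodule R M} (hAB : A ≤ B) [Module.Finite k (M ⧸ A)] :
    Module.Finite k (M ⧸ B) :=
  Module.Finite.of_surjective ((Submodule.factor hAB).restrictScalars k)
    (Submodule.factor_surjective hAB)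

theorem finite_quotient_span_smul (s : Finset R) (N : Submodule R M)
    [Module.Finite k (M ⧸ (Ideal.span (s : Set R) • ⊤ : Submodule R M))]
    [Module.Finite k (M ⧸ N)] :
    Module.Finite k (M ⧸ Ideal.span (s : Set R) • N) := by
  let mulBy (x : s) : M ⧸ N →ₗ[R] M ⧸ Ideal.span (s : Set R) • N :=
    N.mapQ _ (LinearMap.lsmul R M x) fun m hm =>
      Submodule.smul_mem_smul (Ideal.subset_span x.2) hm
  let f : (s →₀ M ⧸ N) →ₗ[R] M ⧸ Ideal.span (s : Set R) • N := Finsupp.lsum R mulBy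
  let g : (M ⧸ Ideal.span (s : Set R) • N) →ₗ[R]
      M ⧸ (Ideal.span (s : Set R) • ⊤ : Submodule R M) :=
    Submodule.factor (smul_mono_right _ le_top)
  have hle : LinearMap.ker g ≤ LinearMap.range f := by
    rw [Submodule.ker_mapQ, Submodule.comap_id, Submodule.map_le_iff_le_comap,
      Submodule.span_smul_eq]
    refine Submodule.set_smul_le _ _ _ fun x m hx _ =>
      ⟨Finsupp.single ⟨x, hx⟩ (N.mkQ m), ?_⟩
    rw [Finsupp.lsum_single]
    rfl
  have hge : LinearMap.range f ≤ LinearMap.ker g := by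
    rw [LinearMap.range_le_ker_iff]
    refine Finsupp.lhom_ext fun x v => ?_
    obtain ⟨m, rfl⟩ := N.mkQ_surjective v
    rw [LinearMap.comp_apply, Finsupp.lsum_single]
    exact (Submodule.Quotient.mk_eq_zero _).2
      (Submodule.smul_mem_smul (Ideal.subset_span x.2) trivial)
  have hexact : Function.Exact f g := LinearMap.exact_iff.2 (hle.antisymm hge)
  have hg : Function.Surjective g := Submodule.factor_surjective _
  exact .of_exact (f := f.restrictScalars k) (g := g.restrictScalars k) hexact hg

theorem finite_quotient_pow_smul_top {I : Ideal R} (hI : I.FG)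
    [Module.Finite k (M ⧸ (I • ⊤ : Submodule R M))] (n : ℕ) :
    Module.Finite k (M ⧸ (I ^ n • ⊤ : Submodule R M)) := by
  obtain ⟨s, rfl⟩ := hI
  induction n with
  | zero =>
    have : Subsingleton (M ⧸ (Ideal.span (s : Set R) ^ 0 • ⊤ : Submodule R M)) :=
      Submodule.Quotient.subsingleton_iff.2 (by simp)
    infer_instance
  | succ n ih =>
    rw [pow_succ', mul_smul]
    exact finite_quotient_span_smul k s _

end Finite

section Noetherian

variable {R M : Type*} [CommRing R] [AddCommGroup M] [Module R M]

theorem filtration_submodule_le_iff {I : Ideal R} {F G : I.Filtration M} :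
    F.submodule ≤ G.submodule ↔ F ≤ G := by
  refine ⟨fun h i m hm => ?_, fun h f hf i => h i (hf i)⟩
  have := h (x := PolynomialModule.single R i m) fun j => ?_
  · simpa using this i
  · rw [PolynomialModule.coeff_single, Finsupp.single_apply]
    split_ifs with hij
    · exact hij ▸ hm
    · exact zero_mem _

theorem wellFoundedOn_Iic_of_stable [IsNoetherianRing R] [IsNoetherian R M] {I : Ideal R}
    {F : I.Filtration M} (hF : F.Stable) : (Set.Iic F).WellFoundedOn (· > ·) := by
  have hnoeth : IsNoetherian (reesAlgebra I) F.submodule :=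
    isNoetherian_of_fg_of_noetherian _
      ((F.submodule_fg_iff_stable fun i => IsNoetherian.noetherian _).2 hF)
  have hwf : WellFoundedGT (Set.Iic F.submodule) :=
    (Submodule.mapIic F.submodule).symm.strictMono.wellFoundedGT
  let e (G : Set.Iic F) : Set.Iic F.submodule :=
    ⟨G.1.submodule, filtration_submodule_le_iff.2 G.2⟩
  have he : StrictMono e := strictMono_of_le_iff_le fun G H => filtration_submodule_le_iff.symm
  exact he.wellFoundedGT.wf

theorem wellFoundedOn_Icc_pow_smul_inter_isShiftStable [IsNoetherianRing R] [IsNoetherian R M]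
    (s : Set R) :
    (Set.Icc (α := ℕ → Submodule R M) (fun i => Ideal.span s ^ (i + 1) • ⊤)
      (fun i => Ideal.span s ^ i • ⊤) ∩
      {N | IsShiftStable s N}).WellFoundedOn (· > ·) := by
  have hwf : (Set.Iic ((Ideal.span s).stableFiltration (⊤ : Submodule R M))).WellFoundedOn
      (· > ·) := wellFoundedOn_Iic_of_stable (Ideal.stableFiltration_stable _ _)
  refine (Set.wellFoundedOn_image (f := Ideal.Filtration.N).2 hwf).subset ?_
  rintro N ⟨⟨hle, hge⟩, hN⟩
  refine ⟨⟨N, fun i => (hge (i + 1)).trans (hle i), fun i => ?_⟩, hge, rfl⟩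
  rw [Submodule.span_smul_eq]
  exact Submodule.set_smul_le _ _ _ fun x m hx hm =>
    hN x hx (i + 1) (Submodule.mem_map_of_mem hm)

end Noetherian

section HilbertSerre

variable (k : Type*) {R M : Type*} [Field k] [CommRing R] [Algebra k R] [AddCommGroup M]
  [Module R M] [Module k M] [IsScalarTower k R M]

/-- The generating series `∑ dim_k (M ⧸ N i) Tⁱ` of the codimensions of a family of submodules.
A quotient of infinite dimension contributes `0`. -/
noncomputable def codimSeries (N : ℕ → Submodule R M) : ℤ⟦X⟧ :=
  PowerSeries.mk fun i => (finrank k (M ⧸ N i) : ℤ)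

theorem coeff_codimSeries_congr {A B : ℕ → Submodule R M} {i j : ℕ} (h : A i = B j) :
    coeff i (codimSeries k A) = coeff j (codimSeries k B) := by
  simpa only [codimSeries, coeff_mk] using
    congrArg (fun N : Submodule R M => (finrank k (M ⧸ N) : ℤ)) h

theorem X_mul_codimSeries_inf_comapShift (x : R) (A B : ℕ → Submodule R M)
    [∀ i, Module.Finite k (M ⧸ A i)] [∀ i, Module.Finite k (M ⧸ B i)] :
    X * codimSeries k (B ⊓ comapShift x A) + codimSeries k (A ⊔ mapShift x B) =
      X * codimSeries k B + codimSeries k A := by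
  ext i
  cases i with
  | zero =>
    rw [map_add, map_add, coeff_zero_X_mul, coeff_zero_X_mul]
    exact congrArg (0 + ·) (coeff_codimSeries_congr k (sup_bot_eq (A 0)))
  | succ i =>
    simp only [codimSeries, map_add, coeff_succ_X_mul, coeff_mk]
    exact_mod_cast finrank_quotient_inf_comap_add (LinearMap.lsmul R M x) (B i) (A (i + 1))

theorem codimSeries_pow_smul_top (I : Ideal R) :
    codimSeries k (fun i => (I ^ i • ⊤ : Submodule R M)) =
      X * codimSeries k fun i => (I ^ (i + 1) • ⊤ : Submodule R M) := by
  ext i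
  cases i with
  | zero =>
    have : Subsingleton (M ⧸ (I ^ 0 • ⊤ : Submodule R M)) :=
      Submodule.Quotient.subsingleton_iff.2 (by simp)
    rw [coeff_zero_X_mul, codimSeries, coeff_mk, finrank_zero_of_subsingleton, Nat.cast_zero]
  | succ i => rw [coeff_succ_X_mul, codimSeries, codimSeries, coeff_mk, coeff_mk]

theorem exists_codimSeries_sub_mul_one_sub_X_pow_eq (s : Finset R) {A B : ℕ → Submodule R M}
    (hAB : A ≤ B) (hA : IsShiftStable (s : Set R) A) (hB : IsShiftStable (s : Set R) B)
    [∀ i, Module.Finite k (M ⧸ A i)]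
    (hacc : (Set.Icc A B ∩ {N | IsShiftStable (s : Set R) N}).WellFoundedOn (· > ·)) :
    ∃ Q : Polynomial ℤ,
      (codimSeries k A - codimSeries k B) * (1 - X) ^ s.card = (Q : ℤ⟦X⟧) := by
  classical
  induction s using Finset.induction_on generalizing A B with
  | empty =>
    have heq := eventually_eq_of_wellFoundedOn_Icc hAB <| hacc.subset fun N hN =>
      ⟨hN, by simp [IsShiftStable]⟩
    obtain ⟨Q, hQ⟩ := exists_eq_coe_of_eventually_coeff_eq_zero
      (F := codimSeries k A - codimSeries k B)
      (heq.mono fun n hn => sub_eq_zero.2 (coeff_codimSeries_congr k hn))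
    exact ⟨Q, by rw [Finset.card_empty, pow_zero, mul_one, hQ]⟩
  | insert x s hx ih =>
    rw [Finset.coe_insert] at hA hB hacc
    have hAs : IsShiftStable (s : Set R) A := fun y hy => hA y (Set.mem_insert_of_mem x hy)
    have hBs : IsShiftStable (s : Set R) B := fun y hy => hB y (Set.mem_insert_of_mem x hy)
    have hAK : A ≤ B ⊓ comapShift x A :=
      le_inf hAB ((gc_mapShift_comapShift x).le_u (hA x (Set.mem_insert x s)))
    have hCB : A ⊔ mapShift x B ≤ B := sup_le hAB (hB x (Set.mem_insert x s))
    have (i : ℕ) : Module.Finite k (M ⧸ B i) := finite_quotient_of_le k (hAB i)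
    have (i : ℕ) : Module.Finite k (M ⧸ (A ⊔ mapShift x B) i) :=
      finite_quotient_of_le k (le_sup_left : A i ≤ (A ⊔ mapShift x B) i)
    obtain ⟨P, hP⟩ := ih hAK hAs (hAs.inf_comapShift hBs x) <| hacc.subset
      fun N ⟨⟨hAN, hNK⟩, hN⟩ => ⟨⟨hAN, hNK.trans inf_le_left⟩,
        hN.insert_of_le_comapShift hAN (hNK.trans inf_le_right)⟩
    obtain ⟨S, hS⟩ := ih hCB (hAs.sup_mapShift hBs x) hBs <| hacc.subset
      fun N ⟨⟨hCN, hNB⟩, hN⟩ => ⟨⟨le_sup_left.trans hCN, hNB⟩,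
        hN.insert_of_mapShift_le hNB (le_sup_right.trans hCN)⟩
    refine ⟨S - Polynomial.X * P, ?_⟩
    have hrec := X_mul_codimSeries_inf_comapShift k x A B
    rw [Finset.card_insert_of_notMem hx, pow_succ', Polynomial.coe_sub, Polynomial.coe_mul,
      Polynomial.coe_X, ← hP, ← hS]
    linear_combination -(1 - X) ^ s.card * hrec

theorem exists_codimSeries_pow_smul_top_mul_one_sub_X_pow_eq [IsNoetherianRing R]
    [IsNoetherian R M] (I : Ideal R) [Module.Finite k (M ⧸ (I • ⊤ : Submodule R M))] :
    ∃ (d : ℕ) (Q : Polynomial ℤ),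
      codimSeries k (fun i => (I ^ (i + 1) • ⊤ : Submodule R M)) * (1 - X) ^ d = (Q : ℤ⟦X⟧) := by
  have (i : ℕ) : Module.Finite k (M ⧸ (I ^ (i + 1) • ⊤ : Submodule R M)) :=
    finite_quotient_pow_smul_top k (IsNoetherian.noetherian I) (i + 1)
  obtain ⟨s, rfl⟩ : ∃ s : Finset R, Ideal.span s = I := IsNoetherian.noetherian I
  obtain ⟨Q, hQ⟩ := exists_codimSeries_sub_mul_one_sub_X_pow_eq k s
    (fun i => Submodule.smul_mono_left (Ideal.pow_le_pow_right i.le_succ))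
    (isShiftStable_pow_smul_top (s : Set R) 1) (isShiftStable_pow_smul_top (s : Set R) 0)
    (wellFoundedOn_Icc_pow_smul_inter_isShiftStable (M := M) (s : Set R))
  refine ⟨s.card + 1, Q, ?_⟩
  rw [← hQ, codimSeries_pow_smul_top]
  ring

end HilbertSerre

theorem hilbert_samuel_series_rational_general (k : Type*) {R : Type*} (M : Type*) [Field k]
    [CommRing R] [IsNoetherianRing R] [Algebra k R] [AddCommGroup M] [Module R M]
    [IsNoetherian R M] [Module k M] [IsScalarTower k R M] (I : Ideal R)
    [Module.Finite k (M ⧸ (I • ⊤ : Submodule R M))] (hI : I • (⊤ : Submodule R M) ≠ ⊤) :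
    ∃ (d : ℕ) (Q : Polynomial ℤ),
      (PowerSeries.mk fun i => (finrank k (M ⧸ (I ^ (i + 1) • ⊤ : Submodule R M)) : ℤ)) *
          (1 - X) ^ d = (Q : ℤ⟦X⟧) ∧
      0 < Q.eval 1 := by
  obtain ⟨d, Q, hQ⟩ := exists_codimSeries_pow_smul_top_mul_one_sub_X_pow_eq k (M := M) I
  refine exists_mul_one_sub_X_pow_eq_eval_one_pos (fun i => ?_) (fun hzero => ?_) hQ
  · rw [coeff_mk]
    positivity
  · have hfinrank : finrank k (M ⧸ (I ^ (0 + 1) • ⊤ : Submodule R M)) = 0 := by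
      simpa only [coeff_mk, map_zero, Nat.cast_eq_zero] using congrArg (coeff 0) hzero
    have := finite_quotient_pow_smul_top k (M := M) (IsNoetherian.noetherian I) (0 + 1)
    have htop := Submodule.Quotient.subsingleton_iff.1 (finrank_zero_iff.1 hfinrank)
    exact hI (by rwa [zero_add, pow_one] at htop)

/-- Let `O` be a Noetherian local ring with maximal ideal `m` and residue field
`k = O/m`, containing a field mapping isomorphically onto `k`.  Then the
Hilbert–Samuel generating function `Σ_{i≥0} dim_k(O/m^{i+1}) Tⁱ` is a rational
function of the form `Q(T)/(1−T)^d` for some polynomial `Q ∈ ℤ[T]` and some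
integer `d ≥ 0` (determined by the dimension of `O`), and `Q(1)` is a positive
integer (the multiplicity `e_m(O)`). -/
theorem hilbert_samuel_series_rational (O k : Type*) [CommRing O] [Field k]
    [Algebra k O] [IsNoetherianRing O] [IsLocalRing O]
    (hres : Function.Bijective
      ((IsLocalRing.residue O).comp (algebraMap k O))) :
    ∃ (d : ℕ) (Q : Polynomial ℤ),
      (PowerSeries.mk fun i =>
          (Module.finrank k (O ⧸ (IsLocalRing.maximalIdeal O) ^ (i + 1)) : ℤ)) *
          (1 - PowerSeries.X) ^ d = (Q : PowerSeries ℤ) ∧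
      0 < Q.eval 1 := by
  have htop (I : Ideal O) : I • (⊤ : Ideal O) = I := by rw [smul_eq_mul, Ideal.mul_top]
  have hfin : Module.Finite k (O ⧸ IsLocalRing.maximalIdeal O • (⊤ : Ideal O)) := by
    rw [htop]
    exact .of_surjective (Algebra.linearMap k (IsLocalRing.ResidueField O)) hres.2
  have := hilbert_samuel_series_rational_general k O (IsLocalRing.maximalIdeal O)
    (by rw [htop]; exact Ideal.IsPrime.ne_top')
  have hfinrank (J : Ideal O) : finrank k (O ⧸ J) = finrank k (O ⧸ J • (⊤ : Ideal O)) :=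
    congrArg (fun J : Ideal O => finrank k (O ⧸ J)) (htop J).symm
  simp only [hfinrank (_ ^ _)]
  exact this
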